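/- arXiv:1212.4203 — 4 statements merged into one kernel-verified Lean document; each statement's English description precedes it below -/
import Mathlib

section
/- In dimensions d = 1 and d = 2 the conclusion of the fractional Poincaré-type lemma fails: for d ∈ {1, 2} there exists a constant C₁ > 0 such that for every ε₀ > 0 there is a t > 0 for which the Gaussian f_t(x) = e^{−t|x|²} satisfies: 0 ≤ f_t(x) ≤ f_t(0) = 1 for all x, f_t ∈ L²(ℝ^d), ∫_{ℝ^d} (|ξ|²/(1+|ξ|²)) |𝓕f_t(ξ)|² dξ ≤ C₁², and yet ∫_{ℝ^d} K_d(y)(1 − f_t(y)) dy < ε₀. -/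
open MeasureTheory Real Set
open scoped FourierTransform

/-- The Bessel kernel `K_d`, convolution kernel of `(1-Δ)⁻¹` on `ℝ^d`. -/
noncomputable def besselKernel (d : ℕ) (x : EuclideanSpace ℝ (Fin d)) : ℝ :=
  ∫ s in Set.Ioi (0:ℝ),
    Real.exp (-s) * (4 * Real.pi * s) ^ (-(d:ℝ)/2) * Real.exp (-‖x‖^2 / (4*s))

/-!
As `t → 0⁺` the Gaussian `f_t` flattens to the constant `1`, so `∫ K_d (1 - f_t) → 0` by dominated
convergence, since `K_d` is an average of heat kernels and hence integrable. The transform of `f_t`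
has height `(π / t) ^ (d / 2)` and lives at the scale `|ξ|² ≈ t`, so the energy is of order
`t · t ^ (-d) · t ^ (d / 2) = t ^ (1 - d / 2)`: it stays bounded exactly when `d ≤ 2`.
-/

open Filter Module Topology

section Gaussian

variable {V : Type*} [NormedAddCommGroup V]

lemma exp_neg_mul_sq_norm_le_one {t : ℝ} (ht : 0 ≤ t) (x : V) : exp (-t * ‖x‖ ^ 2) ≤ 1 := by
  rw [exp_le_one_iff, neg_mul]
  exact neg_nonpos.2 (by positivity)

lemma tendsto_integral_mul_one_sub_exp_neg_mul_sq_norm [MeasurableSpace V] [OpensMeasurableSpace V]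
    {μ : Measure V} {K : V → ℝ} (hK : Integrable K μ) :
    Tendsto (fun t : ℝ ↦ ∫ y, K y * (1 - exp (-t * ‖y‖ ^ 2)) ∂μ) (𝓝[>] 0) (𝓝 0) := by
  suffices h : Tendsto (fun t : ℝ ↦ ∫ y, K y * (1 - exp (-t * ‖y‖ ^ 2)) ∂μ) (𝓝[>] 0)
      (𝓝 (∫ _, 0 ∂μ)) by simpa only [integral_zero] using h
  refine tendsto_integral_filter_of_dominated_convergence (fun y ↦ ‖K y‖) ?_ ?_ hK.norm ?_
  · exact .of_forall fun t ↦ hK.aestronglyMeasurable.mul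
      (Measurable.aestronglyMeasurable (by fun_prop))
  · filter_upwards [self_mem_nhdsWithin] with t (ht : 0 < t)
    refine .of_forall fun y ↦ ?_
    have le_one : exp (-t * ‖y‖ ^ 2) ≤ 1 := exp_neg_mul_sq_norm_le_one ht.le y
    rw [norm_mul, norm_of_nonneg (sub_nonneg.2 le_one)]
    exact mul_le_of_le_one_right (norm_nonneg _) (sub_le_self _ (exp_nonneg _))
  · refine .of_forall fun y ↦ ?_
    have hcont : Continuous fun t : ℝ ↦ K y * (1 - exp (-t * ‖y‖ ^ 2)) := by fun_prop
    simpa using (hcont.tendsto 0).mono_left nhdsWithin_le_nhds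

variable [InnerProductSpace ℝ V] [FiniteDimensional ℝ V] [MeasurableSpace V] [BorelSpace V]

lemma integrable_exp_neg_mul_sq_norm {b : ℝ} (hb : 0 < b) :
    Integrable fun x : V ↦ exp (-b * ‖x‖ ^ 2) := by
  have hb' : 0 < (b : ℂ).re := hb
  refine (GaussianFourier.integrable_cexp_neg_mul_sq_norm_add hb' 0 (0 : V)).norm.congr
    (.of_forall fun x ↦ ?_)
  simp [Complex.norm_exp, ← Complex.ofReal_pow]

lemma lintegral_exp_neg_mul_sq_norm {b : ℝ} (hb : 0 < b) :
    ∫⁻ x : V, ENNReal.ofReal (exp (-b * ‖x‖ ^ 2)) =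
      ENNReal.ofReal ((π / b) ^ (finrank ℝ V / 2 : ℝ)) := by
  rw [← GaussianFourier.integral_rexp_neg_mul_sq_norm hb, ofReal_integral_eq_lintegral_ofReal
    (integrable_exp_neg_mul_sq_norm hb) (.of_forall fun x ↦ exp_nonneg _)]

lemma memLp_two_exp_neg_mul_sq_norm {t : ℝ} (ht : 0 < t) :
    MemLp (fun x : V ↦ exp (-t * ‖x‖ ^ 2)) 2 := by
  rw [memLp_two_iff_integrable_sq (Measurable.aestronglyMeasurable (by fun_prop))]
  refine (integrable_exp_neg_mul_sq_norm (mul_pos two_pos ht)).congr (.of_forall fun x ↦ ?_)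
  simp only [← exp_nat_mul]
  push_cast
  ring_nf

lemma fourier_exp_neg_mul_sq_norm {t : ℝ} (ht : 0 < t) (ξ : V) :
    𝓕 (fun x : V ↦ (exp (-t * ‖x‖ ^ 2) : ℂ)) ξ =
      ((π / t) ^ (finrank ℝ V / 2 : ℝ) * exp (-(π ^ 2 / t) * ‖ξ‖ ^ 2) : ℝ) := by
  have ht' : 0 < (t : ℂ).re := ht
  have h := fourier_gaussian_innerProductSpace ht' ξ
  push_cast [Complex.ofReal_cpow (show 0 ≤ π / t by positivity)] at h ⊢
  rw [h]
  ring_nf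

end Gaussian

section Energy

lemma mul_exp_neg_mul_sq_le {b : ℝ} (hb : 0 < b) (r : ℝ) :
    r * exp (-b * r) ^ 2 ≤ b⁻¹ * exp (-b * r) := by
  have hpeak : b * r * exp (-b * r) ≤ 1 := by
    have h := (mul_exp_neg_le_exp_neg_one (b * r)).trans (exp_le_one_iff.2 (by norm_num))
    rwa [← neg_mul] at h
  calc r * exp (-b * r) ^ 2 = b⁻¹ * exp (-b * r) * (b * r * exp (-b * r)) := by field_simp
    _ ≤ b⁻¹ * exp (-b * r) := mul_le_of_le_one_right (by positivity) hpeak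

variable {V : Type*} [NormedAddCommGroup V] [InnerProductSpace ℝ V] [FiniteDimensional ℝ V]
  [MeasurableSpace V] [BorelSpace V]

lemma energy_density_exp_neg_mul_sq_norm_le {t : ℝ} (ht : 0 < t) (ξ : V) :
    ‖ξ‖ ^ 2 / (1 + ‖ξ‖ ^ 2) * ‖𝓕 (fun x : V ↦ (exp (-t * ‖x‖ ^ 2) : ℂ)) ξ‖ ^ 2 ≤
      ((π / t) ^ (finrank ℝ V / 2 : ℝ)) ^ 2 * (t / π ^ 2) * exp (-(π ^ 2 / t) * ‖ξ‖ ^ 2) := by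
  have hb : 0 < π ^ 2 / t := by positivity
  rw [fourier_exp_neg_mul_sq_norm ht, Complex.norm_real, norm_of_nonneg (by positivity)]
  set A := (π / t) ^ (finrank ℝ V / 2 : ℝ)
  set E := exp (-(π ^ 2 / t) * ‖ξ‖ ^ 2)
  calc ‖ξ‖ ^ 2 / (1 + ‖ξ‖ ^ 2) * (A * E) ^ 2
      ≤ ‖ξ‖ ^ 2 * (A * E) ^ 2 := by
        gcongr
        exact div_le_self (by positivity) (le_add_of_nonneg_right (by positivity))
    _ = A ^ 2 * (‖ξ‖ ^ 2 * E ^ 2) := by ring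
    _ ≤ A ^ 2 * ((π ^ 2 / t)⁻¹ * E) := by
        gcongr A ^ 2 * ?_
        exact mul_exp_neg_mul_sq_le hb _
    _ = A ^ 2 * (t / π ^ 2) * E := by rw [inv_div, mul_assoc]

lemma energy_exp_neg_mul_sq_norm_le {t : ℝ} (ht : 0 < t) :
    ∫⁻ ξ : V, ENNReal.ofReal (‖ξ‖ ^ 2 / (1 + ‖ξ‖ ^ 2) *
        ‖𝓕 (fun x : V ↦ (exp (-t * ‖x‖ ^ 2) : ℂ)) ξ‖ ^ 2) ≤
      ENNReal.ofReal ((π / t) ^ (finrank ℝ V / 2 : ℝ) * (t / π ^ 2)) := by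
  have hb : 0 < π ^ 2 / t := by positivity
  set A := (π / t) ^ (finrank ℝ V / 2 : ℝ) with hA
  have hA_pos : 0 < A := by positivity
  have gaussian_mass : (π / (π ^ 2 / t)) ^ (finrank ℝ V / 2 : ℝ) = A⁻¹ := by
    rw [hA, ← inv_rpow (by positivity)]
    congr 1
    field_simp
  calc _ ≤ ∫⁻ ξ : V, ENNReal.ofReal (A ^ 2 * (t / π ^ 2)) *
          ENNReal.ofReal (exp (-(π ^ 2 / t) * ‖ξ‖ ^ 2)) := by
        refine lintegral_mono fun ξ ↦ ?_
        rw [← ENNReal.ofReal_mul (by positivity)]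
        exact ENNReal.ofReal_le_ofReal (energy_density_exp_neg_mul_sq_norm_le ht ξ)
    _ = ENNReal.ofReal (A ^ 2 * (t / π ^ 2) * A⁻¹) := by
        rw [lintegral_const_mul _ (by fun_prop), lintegral_exp_neg_mul_sq_norm hb, gaussian_mass,
          ← ENNReal.ofReal_mul (by positivity)]
    _ = ENNReal.ofReal (A * (t / π ^ 2)) := by
        congr 1
        field_simp

lemma energy_exp_neg_mul_sq_norm_le_one (hV : finrank ℝ V ≤ 2) {t : ℝ} (ht : 0 < t) (htπ : t ≤ π) :
    ∫⁻ ξ : V, ENNReal.ofReal (‖ξ‖ ^ 2 / (1 + ‖ξ‖ ^ 2) *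
      ‖𝓕 (fun x : V ↦ (exp (-t * ‖x‖ ^ 2) : ℂ)) ξ‖ ^ 2) ≤ 1 := by
  refine (energy_exp_neg_mul_sq_norm_le ht).trans (ENNReal.ofReal_le_one.2 ?_)
  have exponent_le_one : (finrank ℝ V / 2 : ℝ) ≤ 1 :=
    (div_le_one two_pos).2 (by exact_mod_cast hV)
  calc (π / t) ^ (finrank ℝ V / 2 : ℝ) * (t / π ^ 2)
      ≤ (π / t) ^ (1 : ℝ) * (t / π ^ 2) := by
        gcongr
        exact (one_le_div ht).2 htπ
    _ = π⁻¹ := by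
        rw [rpow_one]
        field_simp
    _ ≤ 1 := inv_le_one_of_one_le₀ (one_le_two.trans two_le_pi)

end Energy

section BesselKernel

variable {V : Type*} [NormedAddCommGroup V] [InnerProductSpace ℝ V]

/-- The heat kernel of `∂ₛ - Δ` on `V` at time `s`, meaningful for `0 < s`. The
Bessel kernel is the mixture of the heat kernels with weight `e^{-s}`. -/
noncomputable def heatKernel (s : ℝ) (x : V) : ℝ :=
  (4 * π * s) ^ (-(finrank ℝ V : ℝ) / 2) * exp (-‖x‖ ^ 2 / (4 * s))

lemma besselKernel_eq_integral_heatKernel (d : ℕ) (x : EuclideanSpace ℝ (Fin d)) :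
    besselKernel d x = ∫ s in Ioi (0 : ℝ), exp (-s) * heatKernel s x := by
  simp only [besselKernel, heatKernel, finrank_euclideanSpace_fin, mul_assoc]

lemma heatKernel_nonneg {s : ℝ} (hs : 0 ≤ s) (x : V) : 0 ≤ heatKernel s x := by
  unfold heatKernel
  positivity

lemma heatKernel_eq_mul_exp_neg_mul_sq_norm (s : ℝ) (x : V) :
    heatKernel s x = (4 * π * s) ^ (-(finrank ℝ V : ℝ) / 2) * exp (-(4 * s)⁻¹ * ‖x‖ ^ 2) := by
  rw [heatKernel, neg_div _ (‖x‖ ^ 2), div_eq_inv_mul (‖x‖ ^ 2), neg_mul]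

variable [MeasurableSpace V] [BorelSpace V]

lemma measurable_uncurry_heatKernel : Measurable fun p : ℝ × V ↦ heatKernel p.1 p.2 := by
  unfold heatKernel
  fun_prop

variable [FiniteDimensional ℝ V]

lemma integrable_heatKernel {s : ℝ} (hs : 0 < s) : Integrable fun x : V ↦ heatKernel s x := by
  simp only [heatKernel_eq_mul_exp_neg_mul_sq_norm]
  exact (integrable_exp_neg_mul_sq_norm (by positivity)).const_mul _

lemma integral_heatKernel {s : ℝ} (hs : 0 < s) : ∫ x : V, heatKernel s x = 1 := by
  simp only [heatKernel_eq_mul_exp_neg_mul_sq_norm]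
  rw [integral_const_mul, GaussianFourier.integral_rexp_neg_mul_sq_norm (by positivity),
    div_inv_eq_mul, mul_left_comm, ← mul_assoc, ← rpow_add (by positivity), neg_div,
    neg_add_cancel, rpow_zero]

lemma integrable_prod_mul_heatKernel {w : ℝ → ℝ} (hw : IntegrableOn w (Ioi 0)) :
    Integrable (fun p : ℝ × V ↦ w p.1 * heatKernel p.1 p.2)
      ((volume.restrict (Ioi 0)).prod volume) := by
  have hmeas : AEStronglyMeasurable (fun p : ℝ × V ↦ w p.1 * heatKernel p.1 p.2)
      ((volume.restrict (Ioi 0)).prod volume) :=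
    hw.aestronglyMeasurable.comp_fst.mul measurable_uncurry_heatKernel.aestronglyMeasurable
  refine (integrable_prod_iff hmeas).2 ⟨?_, hw.norm.congr ?_⟩
  · filter_upwards [ae_restrict_mem measurableSet_Ioi] with s hs
    exact (integrable_heatKernel hs).const_mul _
  · filter_upwards [ae_restrict_mem measurableSet_Ioi] with s (hs : 0 < s)
    simp only [norm_mul, norm_of_nonneg (heatKernel_nonneg hs.le _)]
    rw [integral_const_mul, integral_heatKernel hs, mul_one]

lemma integrable_besselKernel (d : ℕ) : Integrable (besselKernel d) := by
  simp only [funext (besselKernel_eq_integral_heatKernel d)]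
  exact (integrable_prod_mul_heatKernel (integrableOn_exp_neg_Ioi 0)).integral_prod_right

end BesselKernel

/-- in dimensions `d = 1, 2` the fractional Poincaré-type lemma fails,
as witnessed by the Gaussians `f_t(x) = e^{-t|x|²}` as `t → 0⁺` (Remark after
Lemma `lem100a`). -/
theorem stmt_2 (d : ℕ) (hd : d = 1 ∨ d = 2) :
    ∃ C₁ : ℝ, 0 < C₁ ∧
      ∀ ε₀ : ℝ, 0 < ε₀ →
        ∃ t : ℝ, 0 < t ∧
          (∀ x : EuclideanSpace ℝ (Fin d),
            0 ≤ Real.exp (-t * ‖x‖^2) ∧ Real.exp (-t * ‖x‖^2) ≤ 1) ∧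
          Real.exp (-t * ‖(0 : EuclideanSpace ℝ (Fin d))‖^2) = 1 ∧
          MemLp (fun x : EuclideanSpace ℝ (Fin d) => Real.exp (-t * ‖x‖^2)) 2 volume ∧
          (∫⁻ ξ : EuclideanSpace ℝ (Fin d),
              ENNReal.ofReal ((‖ξ‖^2 / (1 + ‖ξ‖^2)) *
                ‖𝓕 (fun x : EuclideanSpace ℝ (Fin d) =>
                    (Real.exp (-t * ‖x‖^2) : ℂ)) ξ‖^2))
            ≤ ENNReal.ofReal (C₁^2) ∧
          (∫ y, besselKernel d y * (1 - Real.exp (-t * ‖y‖^2))) < ε₀ := by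
  refine ⟨1, one_pos, fun ε₀ hε₀ ↦ ?_⟩
  have finrank_le_two : finrank ℝ (EuclideanSpace ℝ (Fin d)) ≤ 2 := by
    rw [finrank_euclideanSpace_fin]
    omega
  have eventually_lt := (tendsto_integral_mul_one_sub_exp_neg_mul_sq_norm
    (integrable_besselKernel d)).eventually_lt_const hε₀
  obtain ⟨t, hlt, ht, htπ⟩ := (eventually_lt.and (Ioc_mem_nhdsGT pi_pos)).exists
  refine ⟨t, ht, fun x ↦ ⟨exp_nonneg _, exp_neg_mul_sq_norm_le_one ht.le x⟩, by simp,
    memLp_two_exp_neg_mul_sq_norm ht, ?_, hlt⟩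
  simpa only [one_pow, ENNReal.ofReal_one] using
    energy_exp_neg_mul_sq_norm_le_one finrank_le_two ht htπ
end

section
/- Let p ∈ (1, ∞) and let p′ = p/(p−1) be its Hölder conjugate. There exists a constant C > 0, depending only on p, such that for every measurable function f : ℝ³ → ℝ with f ≥ 0, f ∈ L^p(ℝ³) ∩ L^∞(ℝ³), and every R > 1, one has ∫_{ℝ³} (e^{−|y|}/(4π|y|)) f(y) dy ≤ (1 − (R+1)e^{−R}) ‖f‖_{L^∞(ℝ³)} + C · R^{(2−p′)/p′} e^{−R} ‖f‖_{L^p(ℝ³)}. -/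
open MeasureTheory Real Set

/-!
Split the integral at the sphere `‖y‖ = R`. Inside, bound `f` by its essential supremum: the kernel
has mass `∫₀ᴿ r e⁻ʳ dr = 1 - (R + 1) e⁻ᴿ` there. Outside, apply Hölder: with `q` conjugate to `p`,
the `q`-th power of the norm of the kernel is `(4π)^(1 - q) ∫_R^∞ r^(2 - q) e^(-q r) dr`. Since
`r^(2 - q) ≤ R^(2 - q) e^(r - R)` for `1 ≤ R ≤ r`, this integral is at most
`R^(2 - q) e^(-q R) / (q - 1)`.
-/

open ENNReal in
theorem eLpNorm_one_smul_le_add {α 𝕜 F : Type*} [MeasurableSpace α] {μ : Measure α}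
    [NormedRing 𝕜] [NormedAddCommGroup F] [MulActionWithZero 𝕜 F] [IsBoundedSMul 𝕜 F]
    {p q : ℝ≥0∞} [HolderConjugate q p] {φ : α → 𝕜} {f : α → F}
    (hφ : AEStronglyMeasurable φ μ) (hf : AEStronglyMeasurable f μ)
    {s : Set α} (hs : MeasurableSet s) :
    eLpNorm (φ • f) 1 μ ≤ eLpNorm φ 1 (μ.restrict s) * eLpNorm f ⊤ μ
      + eLpNorm φ q (μ.restrict sᶜ) * eLpNorm f p μ := by
  calc eLpNorm (φ • f) 1 μ
      = eLpNorm (φ • f) 1 (μ.restrict s) + eLpNorm (φ • f) 1 (μ.restrict sᶜ) := by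
        simp only [eLpNorm_one_eq_lintegral_enorm, lintegral_add_compl _ hs]
    _ ≤ eLpNorm φ 1 (μ.restrict s) * eLpNorm f ⊤ (μ.restrict s)
          + eLpNorm φ q (μ.restrict sᶜ) * eLpNorm f p (μ.restrict sᶜ) := by
        gcongr <;> exact eLpNorm_smul_le_mul_eLpNorm hf.restrict hφ.restrict
    _ ≤ _ := by gcongr <;> exact Measure.restrict_le_self

section Radial

open Module

variable {E : Type*} [NormedAddCommGroup E] [NormedSpace ℝ E] [FiniteDimensional ℝ E]
  [Nontrivial E] [MeasurableSpace E] [BorelSpace E] (μ : Measure E) [μ.IsAddHaarMeasure]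

theorem lintegral_fun_norm_addHaar {g : ℝ → ENNReal} (hg : Measurable g) :
    ∫⁻ x, g ‖x‖ ∂μ = finrank ℝ E * μ (Metric.ball 0 1)
      * ∫⁻ r in Ioi (0 : ℝ), ENNReal.ofReal (r ^ (finrank ℝ E - 1)) * g r := by
  calc ∫⁻ x, g ‖x‖ ∂μ = ∫⁻ x : ({0}ᶜ : Set E), g ‖x.1‖ ∂(μ.comap (↑)) := by
        rw [lintegral_subtype_comap (measurableSet_singleton _).compl fun x ↦ g ‖x‖,
          restrict_compl_singleton]
    _ = ∫⁻ x, g x.2 ∂μ.toSphere.prod (.volumeIoiPow (finrank ℝ E - 1)) := by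
        simpa using μ.measurePreserving_homeomorphUnitSphereProd.lintegral_comp
          (f := fun x ↦ g x.2) (by fun_prop)
    _ = μ.toSphere univ * ∫⁻ r : Ioi (0 : ℝ), g r ∂.volumeIoiPow (finrank ℝ E - 1) := by
        rw [lintegral_prod _ (by fun_prop)]
        simp only [lintegral_const, mul_comm]
    _ = _ := by
        rw [μ.toSphere_apply_univ, Measure.volumeIoiPow,
          lintegral_withDensity_eq_lintegral_mul _ (by fun_prop) (by fun_prop)]
        exact congrArg _ (lintegral_subtype_comap measurableSet_Ioi
          fun r ↦ ENNReal.ofReal (r ^ (finrank ℝ E - 1)) * g r)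

theorem setLIntegral_fun_norm_addHaar {g : ℝ → ENNReal} (hg : Measurable g) {s : Set ℝ}
    (hs : MeasurableSet s) :
    ∫⁻ x in norm ⁻¹' s, g ‖x‖ ∂μ = finrank ℝ E * μ (Metric.ball 0 1)
      * ∫⁻ r in s ∩ Ioi 0, ENNReal.ofReal (r ^ (finrank ℝ E - 1)) * g r := by
  rw [← lintegral_indicator (measurable_norm hs), ← Measure.restrict_restrict hs,
    ← lintegral_indicator hs]
  simp only [indicator_mul_right]
  exact lintegral_fun_norm_addHaar μ (hg.indicator hs)

end Radial

theorem eLpNorm_fun_norm_restrict_three {k : ℝ → ℝ} (hk : Measurable k) {s : Set ℝ}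
    (hs : MeasurableSet s) {q : ℝ} (hq : 0 < q) :
    eLpNorm (fun y : EuclideanSpace ℝ (Fin 3) ↦ k ‖y‖) (ENNReal.ofReal q)
        (volume.restrict (norm ⁻¹' s))
      = (ENNReal.ofReal (4 * π)
          * ∫⁻ r in s ∩ Ioi 0, ENNReal.ofReal (r ^ 2 * |k r| ^ q)) ^ (1 / q) := by
  have surface_area : (3 : ENNReal) * volume (Metric.ball (0 : EuclideanSpace ℝ (Fin 3)) 1)
      = ENNReal.ofReal (4 * π) := by
    rw [EuclideanSpace.volume_ball_fin_three, ENNReal.ofReal_one, one_pow, one_mul,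
      ← ENNReal.ofReal_ofNat 3, ← ENNReal.ofReal_mul (by norm_num)]
    congr 1
    ring
  rw [eLpNorm_eq_lintegral_rpow_enorm_toReal (by simpa using hq) (by simp),
    ENNReal.toReal_ofReal hq.le,
    setLIntegral_fun_norm_addHaar volume (g := fun r ↦ ‖k r‖ₑ ^ q) (by fun_prop) hs,
    finrank_euclideanSpace_fin, Nat.cast_ofNat, surface_area]
  congr! 4 with r
  rw [ENNReal.ofReal_mul (sq_nonneg r), ← ENNReal.ofReal_rpow_of_nonneg (abs_nonneg _) hq.le,
    Real.enorm_eq_ofReal_abs]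

theorem integral_mul_exp_neg (R : ℝ) :
    ∫ r in (0 : ℝ)..R, r * exp (-r) = 1 - (R + 1) * exp (-R) := by
  have antideriv (r : ℝ) : HasDerivAt (fun r ↦ -(r + 1) * exp (-r)) (r * exp (-r)) r := by
    refine (((hasDerivAt_id r).add_const 1).neg.mul (hasDerivAt_neg r).exp).congr_deriv ?_
    simp only [Pi.neg_apply, id]
    ring
  rw [intervalIntegral.integral_eq_sub_of_hasDerivAt (fun r _ ↦ antideriv r)
    (Continuous.intervalIntegrable (by fun_prop) _ _)]
  simp only [neg_zero, exp_zero]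
  ring

theorem rpow_le_rpow_mul_exp {a c R r : ℝ} (hac : a ≤ c) (hc : 0 ≤ c) (hR : 1 ≤ R) (hr : R ≤ r) :
    r ^ a ≤ R ^ a * exp (c * (r - R)) := by
  have hR₀ : 0 < R := by linarith
  have hratio : 1 ≤ r / R := (one_le_div hR₀).2 hr
  have hratio_le : r / R ≤ exp (r - R) := calc
    r / R = (r - R) / R + 1 := by field_simp; ring
    _ ≤ (r - R) + 1 := by gcongr; exact div_le_self (sub_nonneg.2 hr) hR
    _ ≤ exp (r - R) := add_one_le_exp _
  calc r ^ a = R ^ a * (r / R) ^ a := by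
        rw [← mul_rpow hR₀.le (by positivity), mul_div_cancel₀ _ hR₀.ne']
    _ ≤ R ^ a * (r / R) ^ c := by gcongr
    _ ≤ R ^ a * exp (r - R) ^ c := by gcongr
    _ = R ^ a * exp (c * (r - R)) := by rw [← exp_mul, mul_comm (r - R)]

theorem lintegral_Ici_rpow_mul_exp_le {a b c R : ℝ} (hac : a ≤ c) (hc : 0 ≤ c) (hcb : c < b)
    (hR : 1 ≤ R) :
    ∫⁻ r in Ici R, ENNReal.ofReal (r ^ a * exp (-b * r))
      ≤ ENNReal.ofReal (R ^ a * exp (-b * R) / (b - c)) := by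
  have hneg : c - b < 0 := by linarith
  have : 0 < R := by linarith
  have hmajorant : IntegrableOn (fun r ↦ R ^ a * exp (-c * R) * exp ((c - b) * r)) (Ici R) := by
    rw [integrableOn_Ici_iff_integrableOn_Ioi]
    exact (integrableOn_exp_mul_Ioi hneg R).const_mul _
  calc ∫⁻ r in Ici R, ENNReal.ofReal (r ^ a * exp (-b * r))
      ≤ ∫⁻ r in Ici R, ENNReal.ofReal (R ^ a * exp (-c * R) * exp ((c - b) * r)) := by
        refine setLIntegral_mono (by fun_prop) fun r hr ↦ ENNReal.ofReal_le_ofReal ?_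
        calc r ^ a * exp (-b * r) ≤ R ^ a * exp (c * (r - R)) * exp (-b * r) := by
              gcongr; exact rpow_le_rpow_mul_exp hac hc hR hr
          _ = R ^ a * exp (-c * R) * exp ((c - b) * r) := by
              simp only [mul_assoc, ← exp_add]; ring_nf
    _ = ENNReal.ofReal (R ^ a * exp (-b * R) / (b - c)) := by
        rw [← ofReal_integral_eq_lintegral_ofReal hmajorant (ae_of_all _ fun r ↦ by positivity),
          integral_Ici_eq_integral_Ioi, integral_const_mul, integral_exp_mul_Ioi hneg,
          neg_div, ← div_neg, neg_sub, ← mul_div_assoc, mul_assoc, ← exp_add]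
        ring_nf

/-- Radial profile of the Bessel kernel of `(1 - Δ)⁻¹` on `ℝ³`, the kernel being
`y ↦ besselProfile ‖y‖`. At the singularity `r = 0` it takes the value `0`. -/
noncomputable def besselProfile (r : ℝ) : ℝ := exp (-r) / (4 * π * r)

theorem measurable_besselProfile : Measurable besselProfile := by
  unfold besselProfile
  fun_prop

theorem sq_mul_abs_besselProfile_rpow {r : ℝ} (hr : 0 < r) (q : ℝ) :
    r ^ 2 * |besselProfile r| ^ q = (4 * π) ^ (-q) * (r ^ (2 - q) * exp (-q * r)) := by
  have hnonneg : 0 ≤ besselProfile r := by unfold besselProfile; positivity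
  rw [abs_of_nonneg hnonneg, besselProfile, div_rpow (by positivity) (by positivity),
    mul_rpow (by positivity) hr.le, ← exp_mul, rpow_sub hr, rpow_two, rpow_neg (by positivity),
    neg_mul, neg_mul, mul_comm r q]
  field_simp

theorem eLpNorm_one_besselProfile_restrict_Iio {R : ℝ} (hR : 0 ≤ R) :
    eLpNorm (fun y : EuclideanSpace ℝ (Fin 3) ↦ besselProfile ‖y‖) 1
      (volume.restrict (norm ⁻¹' Iio R)) = ENNReal.ofReal (1 - (R + 1) * exp (-R)) := by
  have hint : IntegrableOn (fun r ↦ (4 * π)⁻¹ * (r * exp (-r))) (Ioc 0 R) :=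
    Continuous.integrableOn_Ioc (by fun_prop)
  have hprofile : ∫⁻ r in Ioo 0 R, ENNReal.ofReal (r ^ 2 * |besselProfile r| ^ (1 : ℝ))
      = ENNReal.ofReal ((4 * π)⁻¹ * (1 - (R + 1) * exp (-R))) := calc
    _ = ∫⁻ r in Ioc 0 R, ENNReal.ofReal ((4 * π)⁻¹ * (r * exp (-r))) := by
        rw [restrict_Ioo_eq_restrict_Ioc]
        refine setLIntegral_congr_fun measurableSet_Ioc fun r hr ↦ ?_
        rw [sq_mul_abs_besselProfile_rpow hr.1]
        norm_num [rpow_neg_one]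
    _ = _ := by
        rw [← ofReal_integral_eq_lintegral_ofReal hint, integral_const_mul,
          ← intervalIntegral.integral_of_le hR, integral_mul_exp_neg]
        filter_upwards [ae_restrict_mem measurableSet_Ioc] with r hr
        have := hr.1
        positivity
  rw [← ENNReal.ofReal_one, eLpNorm_fun_norm_restrict_three measurable_besselProfile
    measurableSet_Iio one_pos, inter_comm, Ioi_inter_Iio, hprofile, div_one, ENNReal.rpow_one,
    ← ENNReal.ofReal_mul (by positivity), mul_inv_cancel_left₀ (by positivity)]

theorem lintegral_Ici_sq_mul_abs_besselProfile_rpow_le {q R : ℝ} (hq : 1 < q) (hR : 1 ≤ R) :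
    ∫⁻ r in Ici R, ENNReal.ofReal (r ^ 2 * |besselProfile r| ^ q)
      ≤ ENNReal.ofReal ((4 * π) ^ (-q) * (R ^ (2 - q) * exp (-q * R) / (q - 1))) := by
  have hprofile : EqOn (fun r ↦ ENNReal.ofReal (r ^ 2 * |besselProfile r| ^ q))
      (fun r ↦ ENNReal.ofReal ((4 * π) ^ (-q)) * ENNReal.ofReal (r ^ (2 - q) * exp (-q * r)))
      (Ici R) := fun r hr ↦ by
    dsimp only
    rw [sq_mul_abs_besselProfile_rpow (by linarith [mem_Ici.1 hr]),
      ENNReal.ofReal_mul (by positivity)]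
  rw [setLIntegral_congr_fun measurableSet_Ici hprofile, lintegral_const_mul _ (by fun_prop),
    ENNReal.ofReal_mul (by positivity)]
  gcongr
  exact lintegral_Ici_rpow_mul_exp_le (c := 1) (by linarith) zero_le_one hq hR

theorem eLpNorm_besselProfile_restrict_Ici_le {q R : ℝ} (hq : 1 < q) (hR : 1 ≤ R) :
    eLpNorm (fun y : EuclideanSpace ℝ (Fin 3) ↦ besselProfile ‖y‖) (ENNReal.ofReal q)
        (volume.restrict (norm ⁻¹' Ici R))
      ≤ ENNReal.ofReal
          (((4 * π) ^ (1 - q) / (q - 1)) ^ (1 / q) * R ^ ((2 - q) / q) * exp (-R)) := by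
  have hq₀ : 0 < q := by linarith
  have : 0 < q - 1 := by linarith
  have hR₀ : 0 < R := by linarith
  have hset : Ici R ∩ Ioi 0 = Ici R := inter_eq_left.2 fun r hr ↦ hR₀.trans_le hr
  have hroot : (4 * π * ((4 * π) ^ (-q) * (R ^ (2 - q) * exp (-q * R) / (q - 1)))) ^ (1 / q)
      = ((4 * π) ^ (1 - q) / (q - 1)) ^ (1 / q) * R ^ ((2 - q) / q) * exp (-R) := calc
    _ = ((4 * π) ^ (1 - q) / (q - 1) * R ^ (2 - q) * exp (-q * R)) ^ (1 / q) := by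
        rw [sub_eq_add_neg 1 q, rpow_add (by positivity), rpow_one]
        ring_nf
    _ = _ := by
        rw [mul_rpow (by positivity) (by positivity), mul_rpow (by positivity) (by positivity),
          ← rpow_mul hR₀.le, ← exp_mul, mul_one_div, mul_one_div, neg_mul, neg_div,
          mul_div_cancel_left₀ _ hq₀.ne']
  rw [eLpNorm_fun_norm_restrict_three measurable_besselProfile measurableSet_Ici hq₀, hset]
  grw [lintegral_Ici_sq_mul_abs_besselProfile_rpow_le hq hR]
  rw [← ENNReal.ofReal_mul (by positivity),
    ENNReal.ofReal_rpow_of_nonneg (by positivity) (by positivity), hroot]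

theorem eLpNorm_one_besselProfile_smul_le {F : Type*} [NormedAddCommGroup F] [NormedSpace ℝ F]
    {p q R : ℝ} (hpq : p.HolderConjugate q) (hR : 1 ≤ R) {f : EuclideanSpace ℝ (Fin 3) → F}
    (hf : AEStronglyMeasurable f) :
    eLpNorm (fun y ↦ besselProfile ‖y‖ • f y) 1
      ≤ ENNReal.ofReal (1 - (R + 1) * exp (-R)) * eLpNorm f ⊤
        + ENNReal.ofReal
            (((4 * π) ^ (1 - q) / (q - 1)) ^ (1 / q) * R ^ ((2 - q) / q) * exp (-R))
          * eLpNorm f (ENNReal.ofReal p) := by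
  have := hpq.symm.ennrealOfReal
  have hkernel : Measurable fun y : EuclideanSpace ℝ (Fin 3) ↦ besselProfile ‖y‖ :=
    measurable_besselProfile.comp measurable_norm
  grw [← eLpNorm_besselProfile_restrict_Ici_le hpq.symm.lt hR,
    ← eLpNorm_one_besselProfile_restrict_Iio (zero_le_one.trans hR), ← compl_Iio, preimage_compl]
  exact eLpNorm_one_smul_le_add hkernel.aestronglyMeasurable hf (measurable_norm measurableSet_Iio)

theorem stmt_7_general (p : ℝ) (hp : 1 < p) :
    ∃ C : ℝ, 0 < C ∧
      ∀ {F : Type*} [NormedAddCommGroup F] [NormedSpace ℝ F] (f : EuclideanSpace ℝ (Fin 3) → F),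
        MemLp f (ENNReal.ofReal p) → MemLp f ⊤ → ∀ R : ℝ, 1 ≤ R →
          Integrable (fun y ↦ besselProfile ‖y‖ • f y) ∧
          ∫ y, ‖besselProfile ‖y‖ • f y‖
            ≤ (1 - (R + 1) * exp (-R)) * (eLpNorm f ⊤).toReal
              + C * R ^ ((2 - p / (p - 1)) / (p / (p - 1))) * exp (-R)
                  * (eLpNorm f (ENNReal.ofReal p)).toReal := by
  have hpq : p.HolderConjugate (p / (p - 1)) := .conjExponent hp
  generalize p / (p - 1) = q at hpq ⊢
  have hq : 0 < q - 1 := sub_pos.2 hpq.symm.lt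
  refine ⟨((4 * π) ^ (1 - q) / (q - 1)) ^ (1 / q), by positivity, ?_⟩
  intro F _ _ f hfp hfi R hR
  have hmass : 0 ≤ 1 - (R + 1) * exp (-R) := by
    rw [sub_nonneg, exp_neg, ← div_eq_mul_inv, div_le_one (exp_pos R)]
    exact add_one_le_exp R
  have hbound := eLpNorm_one_besselProfile_smul_le hpq hR hfp.aestronglyMeasurable
  rw [← ENNReal.ofReal_toReal hfp.eLpNorm_ne_top, ← ENNReal.ofReal_toReal hfi.eLpNorm_ne_top,
    ← ENNReal.ofReal_mul hmass, ← ENNReal.ofReal_mul (by positivity),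
    ← ENNReal.ofReal_add (by positivity) (by positivity)] at hbound
  have hmeas : AEStronglyMeasurable (fun y ↦ besselProfile ‖y‖ • f y) :=
    (measurable_besselProfile.comp measurable_norm).aestronglyMeasurable.smul
      hfp.aestronglyMeasurable
  refine ⟨memLp_one_iff_integrable.1 ⟨hmeas, hbound.trans_lt ENNReal.ofReal_lt_top⟩, ?_⟩
  rw [integral_norm_eq_lintegral_enorm hmeas, ← eLpNorm_one_eq_lintegral_enorm]
  exact ENNReal.toReal_le_of_le_ofReal (by positivity) hbound

/-- the quantitative 3D Bessel-kernel splitting estimate. -/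
theorem stmt_7 (p : ℝ) (hp : 1 < p) :
    ∃ C : ℝ, 0 < C ∧
      ∀ f : EuclideanSpace ℝ (Fin 3) → ℝ, Measurable f →
        (∀ x, 0 ≤ f x) →
        MemLp f (ENNReal.ofReal p) volume →
        MemLp f ⊤ volume →
        ∀ R : ℝ, 1 < R →
          (∫ y : EuclideanSpace ℝ (Fin 3), (Real.exp (-‖y‖) / (4 * Real.pi * ‖y‖)) * f y)
            ≤ (1 - (R + 1) * Real.exp (-R)) * (eLpNorm f ⊤ volume).toReal
              + C * R ^ ((2 - p/(p-1)) / (p/(p-1))) * Real.exp (-R)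
                  * (eLpNorm f (ENNReal.ofReal p) volume).toReal := by
  obtain ⟨C, hC, hbound⟩ := stmt_7_general p hp
  exact ⟨C, hC, fun f _ _ hfp hfi R hR ↦ (le_abs_self _).trans <|
    (norm_integral_le_integral_norm _).trans (hbound f hfp hfi R hR.le).2⟩
end

section
/- Let T > 0, B > 0, L > 0, c₁ > 0. Let b, c : ℝ × [0, T] → ℝ be continuous functions such that |b(x,t)| ≤ B and |b(x,t) − b(y,t)| ≤ L |x − y| for all x, y ∈ ℝ and t ∈ [0,T]. Let f : ℝ × [0, T] → ℝ be continuously differentiable and satisfy ∂_t f(x,t) + b(x,t) ∂_x f(x,t) + c(x,t) f(x,t) = 0 for all (x,t) ∈ ℝ × [0,T]. If f(x, 0) ≤ 0 for every x with |x| ≤ c₁, then f(x, t) ≤ 0 for every (x, t) ∈ ℝ × [0, T] with |x| + B t ≤ c₁. -/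
open Set

/-!
Suppose `F` is positive somewhere on the backward cone `‖x‖ + B t ≤ r`. After multiplication by
`exp (-k t)` with `-k` below the minimum of `c`, the zeroth-order coefficient is positive. At a
positive maximum over the compact cone, `t > 0` by the initial condition, and the backward
characteristic direction `(-b, -1)` points into the cone because `‖b‖ ≤ B`. So the derivative
along `(b, 1)` is nonnegative there, whereas the equation makes it negative. This maximum
principle takes the place of integration along characteristics.
-/

/-- The truncated backward light cone `‖x‖ + B t ≤ r`, `0 ≤ t ≤ T`, of points `(x, t)` whose past at
speed at most `B` meets time `0` inside the closed ball of radius `r`. Space is the first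
coordinate, time the second. -/
def dependenceCone (E : Type*) [NormedAddCommGroup E] (B r T : ℝ) : Set (E × ℝ) :=
  {p | p.2 ∈ Icc 0 T ∧ ‖p.1‖ + B * p.2 ≤ r}

section

variable {E : Type*} [NormedAddCommGroup E] {B r T : ℝ}

lemma dependenceCone_subset_univ_prod_Icc : dependenceCone E B r T ⊆ univ ×ˢ Icc 0 T :=
  fun _ hp => ⟨mem_univ _, hp.1⟩

lemma isCompact_dependenceCone [ProperSpace E] : IsCompact (dependenceCone E B r T) := by
  have h_closed : IsClosed (dependenceCone E B r T) :=
    (isClosed_Icc.preimage continuous_snd).inter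
      (isClosed_le (f := fun p : E × ℝ => ‖p.1‖ + B * p.2) (by fun_prop) continuous_const)
  refine ((isCompact_closedBall (0 : E) (r + |B| * T)).prod isCompact_Icc).of_isClosed_subset
    h_closed fun p ⟨hpT, hpr⟩ => ⟨mem_closedBall_zero_iff.2 ?_, hpT⟩
  have h_radius : -(B * p.2) ≤ |B| * T := calc
    -(B * p.2) = -B * p.2 := by ring
    _ ≤ |B| * p.2 := mul_le_mul_of_nonneg_right (neg_le_abs B) hpT.1
    _ ≤ |B| * T := mul_le_mul_of_nonneg_left hpT.2 (abs_nonneg B)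
  linarith

variable [NormedSpace ℝ E]

lemma sub_smul_mem_dependenceCone {p : E × ℝ} (hp : p ∈ dependenceCone E B r T) {v : E}
    (hv : ‖v‖ ≤ B) {h : ℝ} (hh : h ∈ Icc 0 p.2) :
    (p.1 - h • v, p.2 - h) ∈ dependenceCone E B r T := by
  obtain ⟨⟨-, hpT⟩, hpr⟩ := hp
  refine ⟨⟨sub_nonneg.2 hh.2, (sub_le_self _ hh.1).trans hpT⟩, ?_⟩
  calc ‖p.1 - h • v‖ + B * (p.2 - h)
      ≤ ‖p.1‖ + h * ‖v‖ + B * (p.2 - h) := by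
        grw [norm_sub_le, norm_smul, Real.norm_of_nonneg hh.1]
    _ ≤ ‖p.1‖ + h * B + B * (p.2 - h) := by
        have := hh.1
        gcongr
    _ = ‖p.1‖ + B * p.2 := by ring
    _ ≤ r := hpr

lemma neg_mem_posTangentConeAt_dependenceCone {p : E × ℝ} (hp : p ∈ dependenceCone E B r T)
    (hpos : 0 < p.2) {v : E} (hv : ‖v‖ ≤ B) :
    -(v, (1 : ℝ)) ∈ posTangentConeAt (dependenceCone E B r T) p := by
  refine mem_posTangentConeAt_of_frequently_mem (Filter.Eventually.frequently ?_)
  filter_upwards [Ioo_mem_nhdsGT hpos] with h hh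
  convert sub_smul_mem_dependenceCone hp hv (Ioo_subset_Icc_self hh) using 1
  ext <;> simp [sub_eq_add_neg]

lemma apply_nonneg_of_isMaxOn_dependenceCone {F : E × ℝ → ℝ} {F' : E × ℝ →L[ℝ] ℝ} {p : E × ℝ}
    (hmax : IsMaxOn F (dependenceCone E B r T) p)
    (hF : HasFDerivWithinAt F F' (dependenceCone E B r T) p)
    (hp : p ∈ dependenceCone E B r T) (hpos : 0 < p.2) {v : E} (hv : ‖v‖ ≤ B) :
    0 ≤ F' (v, 1) := by
  have h_backward : F' (-(v, 1)) ≤ 0 := hmax.localize.hasFDerivWithinAt_nonpos hF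
    (neg_mem_posTangentConeAt_dependenceCone hp hpos hv)
  simpa only [map_neg, neg_nonpos] using h_backward

theorem nonpos_on_dependenceCone_of_apply_neg [ProperSpace E] {b : E × ℝ → E} {F : E × ℝ → ℝ}
    {F' : E × ℝ → E × ℝ →L[ℝ] ℝ} (hb : ∀ p ∈ dependenceCone E B r T, ‖b p‖ ≤ B)
    (hF : ∀ p ∈ dependenceCone E B r T,
      HasFDerivWithinAt F (F' p) (dependenceCone E B r T) p)
    (hneg : ∀ p ∈ dependenceCone E B r T, 0 < F p → F' p (b p, 1) < 0)
    (h0 : ∀ x : E, ‖x‖ ≤ r → F (x, 0) ≤ 0) :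
    ∀ p ∈ dependenceCone E B r T, F p ≤ 0 := by
  intro q hq
  obtain ⟨p, hp, hmax⟩ := isCompact_dependenceCone.exists_isMaxOn ⟨q, hq⟩
    fun p hp => (hF p hp).continuousWithinAt
  refine (hmax hq).trans (not_lt.1 fun hFp => ?_)
  have htime : 0 < p.2 := by
    refine hp.1.1.lt_of_ne fun hzero => hFp.not_ge ?_
    have hpr := hp.2
    rw [← hzero, mul_zero, add_zero] at hpr
    simpa only [hzero] using h0 p.1 hpr
  exact (hneg p hp hFp).not_ge
    (apply_nonneg_of_isMaxOn_dependenceCone hmax (hF p hp) hp htime (hb p hp))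

lemma hasFDerivWithinAt_exp_neg_snd_mul {F : E × ℝ → ℝ} {F' : E × ℝ →L[ℝ] ℝ} {s : Set (E × ℝ)}
    {p : E × ℝ} (hF : HasFDerivWithinAt F F' s p) (k : ℝ) :
    HasFDerivWithinAt (fun q => Real.exp (-(k * q.2)) * F q)
      (Real.exp (-(k * p.2)) • (F' - (k * F p) • ContinuousLinearMap.snd ℝ E ℝ)) s p := by
  have h_exp := ((hasFDerivWithinAt_snd (𝕜 := ℝ) (s := s) (p := p)).const_mul k).neg.exp
  refine (h_exp.mul hF).congr_fderiv ?_
  refine ContinuousLinearMap.ext fun v => ?_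
  simp only [Pi.neg_apply, smul_neg, add_apply, smul_apply, smul_eq_mul, neg_apply,
    ContinuousLinearMap.coe_snd', sub_apply]
  ring

theorem stmt_16_general [ProperSpace E] {b : E × ℝ → E} {c F : E × ℝ → ℝ}
    {F' : E × ℝ → E × ℝ →L[ℝ] ℝ} (hb : ∀ p ∈ dependenceCone E B r T, ‖b p‖ ≤ B)
    (hc : BddBelow (c '' dependenceCone E B r T))
    (hF : ∀ p ∈ dependenceCone E B r T,
      HasFDerivWithinAt F (F' p) (dependenceCone E B r T) p)
    (hPDE : ∀ p ∈ dependenceCone E B r T, F' p (b p, 1) + c p * F p ≤ 0)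
    (h0 : ∀ x : E, ‖x‖ ≤ r → F (x, 0) ≤ 0) :
    ∀ p ∈ dependenceCone E B r T, F p ≤ 0 := by
  obtain ⟨m, hm⟩ := hc
  let k := 1 - m
  -- `k + c ≥ 1` is the zeroth-order coefficient of the equation for `exp (-k t) F`.
  have hweight (q : E × ℝ) : 0 < Real.exp (-(k * q.2)) := Real.exp_pos _
  have hweighted_neg : ∀ p ∈ dependenceCone E B r T, 0 < Real.exp (-(k * p.2)) * F p →
      (Real.exp (-(k * p.2)) • (F' p - (k * F p) • ContinuousLinearMap.snd ℝ E ℝ))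
        (b p, 1) < 0 := by
    intro p hp hpos
    have hFp : 0 < F p := (mul_pos_iff_of_pos_left (hweight p)).1 hpos
    have hcF : m * F p ≤ c p * F p := by
      gcongr
      exact hm (mem_image_of_mem c hp)
    have hdecay : F' p (b p, 1) - k * F p < 0 := by linarith [hPDE p hp]
    simpa using mul_neg_of_pos_of_neg (hweight p) hdecay
  intro p hp
  have hweighted := nonpos_on_dependenceCone_of_apply_neg hb
    (fun p hp => hasFDerivWithinAt_exp_neg_snd_mul (hF p hp) k) hweighted_neg
    (fun x hx => mul_nonpos_of_nonneg_of_nonpos (hweight _).le (h0 x hx)) p hp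
  exact nonpos_of_mul_nonpos_right hweighted (hweight p)

end

lemma map_prodMk_eq_add_smul {R M N Φ : Type*} [Semiring R] [AddCommMonoid M] [AddCommMonoid N]
    [Module R M] [Module R N] [FunLike Φ (R × M) N] [LinearMapClass Φ R (R × M) N]
    (A : Φ) (a : R) (y : M) : A (a, y) = A (0, y) + a • A (1, 0) := by
  rw [← map_smul, ← map_add]
  simp

/-- finite speed of propagation for the sign of solutions of a
linear transport equation `∂ₜ f + b ∂ₓ f + c f = 0`. -/
theorem stmt_16 (T B L c₁ : ℝ) (hT : 0 < T) (hB : 0 < B) (hL : 0 < L) (hc₁ : 0 < c₁)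
    (b c F : ℝ × ℝ → ℝ)
    (hb_cont : ContinuousOn b (Set.univ ×ˢ Set.Icc (0:ℝ) T))
    (hc_cont : ContinuousOn c (Set.univ ×ˢ Set.Icc (0:ℝ) T))
    (hb_bdd : ∀ x t : ℝ, t ∈ Set.Icc (0:ℝ) T → |b (x, t)| ≤ B)
    (hb_lip : ∀ x y t : ℝ, t ∈ Set.Icc (0:ℝ) T → |b (x, t) - b (y, t)| ≤ L * |x - y|)
    (hF : ContDiffOn ℝ 1 F (Set.univ ×ˢ Set.Icc (0:ℝ) T))
    (hPDE : ∀ x t : ℝ, t ∈ Set.Icc (0:ℝ) T →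
      fderivWithin ℝ F (Set.univ ×ˢ Set.Icc (0:ℝ) T) (x, t) (0, 1)
        + b (x, t) * fderivWithin ℝ F (Set.univ ×ˢ Set.Icc (0:ℝ) T) (x, t) (1, 0)
        + c (x, t) * F (x, t) = 0)
    (h0 : ∀ x : ℝ, |x| ≤ c₁ → F (x, 0) ≤ 0) :
    ∀ x t : ℝ, t ∈ Set.Icc (0:ℝ) T → |x| + B * t ≤ c₁ → F (x, t) ≤ 0 := by
  intro x t ht hxt
  have h_sub := dependenceCone_subset_univ_prod_Icc (E := ℝ) (B := B) (r := c₁) (T := T)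
  refine stmt_16_general (b := b) (c := c) (fun p hp => hb_bdd p.1 p.2 hp.1)
    (isCompact_dependenceCone.bddBelow_image (hc_cont.mono h_sub))
    (fun p hp => ((hF.differentiableOn one_ne_zero p (h_sub hp)).hasFDerivWithinAt).mono h_sub)
    (fun p hp => ?_) h0 (x, t) ⟨ht, hxt⟩
  rw [map_prodMk_eq_add_smul]
  exact (hPDE p.1 p.2 hp.1).le
end

section
/- Let g : (0, ∞) → ℝ be continuously differentiable with lim_{r→∞} g(r) = 0, ∫₀^∞ g(r)² r dr < ∞ and ∫₀^∞ g′(r)² r dr < ∞. Then for every R > 0, g(R)² ≤ (2/R) · ( ∫₀^∞ g(r)² r dr )^{1/2} · ( ∫₀^∞ g′(r)² r dr )^{1/2}. -/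
open MeasureTheory Set Filter

/-! Integrating `(‖g‖²)' = 2⟪g, g'⟫` over `(R, ∞)` gives `‖g R‖² = -2 ∫_R^∞ ⟪g, g'⟫`. A monotone
weight `w` satisfies `w R ≤ w r` for `r > R`, so after multiplying by `w R` the weight can be moved
inside the integral, where the weighted Cauchy–Schwarz inequality applies. The boundary term at
infinity vanishes because `‖g‖²` and its derivative are both integrable on `(R, ∞)`. -/

section CauchySchwarz

variable {α E F : Type*} [MeasurableSpace α] {μ : Measure α}
  [SeminormedAddCommGroup E] [SeminormedAddCommGroup F]

lemma memLp_two_sqrt {f : α → ℝ} (hf : Integrable f μ) : MemLp (fun x ↦ √(f x)) 2 μ := by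
  rw [memLp_two_iff_integrable_sq
    (Real.continuous_sqrt.comp_aestronglyMeasurable hf.aestronglyMeasurable)]
  simpa only [Real.sq_sqrt'] using hf.pos_part

lemma integral_sqrt_mul_sqrt_le {f h : α → ℝ} (hf₀ : 0 ≤ᵐ[μ] f) (hh₀ : 0 ≤ᵐ[μ] h)
    (hf : Integrable f μ) (hh : Integrable h μ) :
    ∫ x, √(f x) * √(h x) ∂μ ≤ √(∫ x, f x ∂μ) * √(∫ x, h x ∂μ) := by
  have integral_sq_sqrt {k : α → ℝ} (hk : 0 ≤ᵐ[μ] k) :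
      ∫ x, √(k x) ^ (2 : ℝ) ∂μ = ∫ x, k x ∂μ :=
    integral_congr_ae (hk.mono fun x hx ↦ by simp only [Real.rpow_two, Real.sq_sqrt hx])
  have holder := integral_mul_le_Lp_mul_Lq_of_nonneg (μ := μ) Real.HolderConjugate.two_two
    (ae_of_all _ fun x ↦ Real.sqrt_nonneg (f x)) (ae_of_all _ fun x ↦ Real.sqrt_nonneg (h x))
    (by simpa using memLp_two_sqrt hf) (by simpa using memLp_two_sqrt hh)
  rwa [integral_sq_sqrt hf₀, integral_sq_sqrt hh₀, ← Real.sqrt_eq_rpow, ← Real.sqrt_eq_rpow]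
    at holder

lemma norm_mul_norm_mul_eq_sqrt_mul_sqrt (x : E) (y : F) {c : ℝ} (hc : 0 ≤ c) :
    ‖x‖ * ‖y‖ * c = √(‖x‖ ^ 2 * c) * √(‖y‖ ^ 2 * c) := by
  rw [Real.sqrt_mul (sq_nonneg _), Real.sqrt_mul (sq_nonneg _), Real.sqrt_sq (norm_nonneg _),
    Real.sqrt_sq (norm_nonneg _), mul_mul_mul_comm, Real.mul_self_sqrt hc]

variable {u : α → E} {v : α → F} {w : α → ℝ}

lemma integrable_norm_mul_norm_mul_weight (hw : 0 ≤ᵐ[μ] w)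
    (hu : Integrable (fun x ↦ ‖u x‖ ^ 2 * w x) μ) (hv : Integrable (fun x ↦ ‖v x‖ ^ 2 * w x) μ) :
    Integrable (fun x ↦ ‖u x‖ * ‖v x‖ * w x) μ :=
  ((memLp_two_sqrt hu).integrable_mul (memLp_two_sqrt hv)).congr
    (hw.mono fun x hx ↦ (norm_mul_norm_mul_eq_sqrt_mul_sqrt (u x) (v x) hx).symm)

lemma integral_norm_mul_norm_mul_weight_le (hw : 0 ≤ᵐ[μ] w)
    (hu : Integrable (fun x ↦ ‖u x‖ ^ 2 * w x) μ) (hv : Integrable (fun x ↦ ‖v x‖ ^ 2 * w x) μ) :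
    ∫ x, ‖u x‖ * ‖v x‖ * w x ∂μ ≤ √(∫ x, ‖u x‖ ^ 2 * w x ∂μ) * √(∫ x, ‖v x‖ ^ 2 * w x ∂μ) := by
  rw [integral_congr_ae
    (hw.mono fun x hx ↦ norm_mul_norm_mul_eq_sqrt_mul_sqrt (u x) (v x) hx)]
  exact integral_sqrt_mul_sqrt_le (hw.mono fun x hx ↦ mul_nonneg (sq_nonneg _) hx)
    (hw.mono fun x hx ↦ mul_nonneg (sq_nonneg _) hx) hu hv

end CauchySchwarz

section Weight

variable {α : Type*} [MeasurableSpace α] {μ : Measure α} {s t : Set α} {f w : α → ℝ} {c : ℝ}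

lemma integrableOn_of_integrableOn_mul_of_le (hs : MeasurableSet s) (hc : 0 < c)
    (hcw : ∀ x ∈ s, c ≤ w x) (hw : AEMeasurable w (μ.restrict s))
    (hfw : IntegrableOn (fun x ↦ f x * w x) s μ) : IntegrableOn f s μ := by
  have inv_le : ∀ x ∈ s, ‖(w x)⁻¹‖ ≤ c⁻¹ := fun x hx ↦ by
    rw [Real.norm_of_nonneg (inv_nonneg.2 (hc.le.trans (hcw x hx)))]
    exact inv_anti₀ hc (hcw x hx)
  exact (Integrable.mul_bdd hfw hw.inv.aestronglyMeasurable
    (ae_restrict_of_forall_mem hs inv_le)).congr (ae_restrict_of_forall_mem hs fun x hx ↦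
      mul_inv_cancel_right₀ (hc.trans_le (hcw x hx)).ne' (f x))

lemma mul_setIntegral_le_setIntegral_mul (hs : MeasurableSet s) (ht : MeasurableSet t)
    (hst : s ⊆ t) (hc : 0 ≤ c) (hcw : ∀ x ∈ s, c ≤ w x) (hw : ∀ x ∈ t, 0 ≤ w x)
    (hf : ∀ x ∈ t, 0 ≤ f x) (hfw : IntegrableOn (fun x ↦ f x * w x) t μ) :
    c * ∫ x in s, f x ∂μ ≤ ∫ x in t, f x * w x ∂μ :=
  calc c * ∫ x in s, f x ∂μ
    _ = ∫ x in s, f x * c ∂μ := by rw [integral_mul_const, mul_comm]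
    _ ≤ ∫ x in s, f x * w x ∂μ :=
        integral_mono_of_nonneg
          (ae_restrict_of_forall_mem hs fun x hx ↦ mul_nonneg (hf x (hst hx)) hc)
          (hfw.mono_set hst)
          (ae_restrict_of_forall_mem hs fun x hx ↦
            mul_le_mul_of_nonneg_left (hcw x hx) (hf x (hst hx)))
    _ ≤ ∫ x in t, f x * w x ∂μ :=
        setIntegral_mono_set hfw
          (ae_restrict_of_forall_mem ht fun x hx ↦ mul_nonneg (hf x hx) (hw x hx))
          hst.eventuallyLE

end Weight

section HalfLine

variable {E : Type*} [NormedAddCommGroup E] [InnerProductSpace ℝ E] {g g' : ℝ → E} {a R : ℝ}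

lemma aestronglyMeasurable_inner_hasDerivAt {s : Set ℝ} (hs : MeasurableSet s)
    (hg : ∀ r ∈ s, HasDerivAt g (g' r) r) :
    AEStronglyMeasurable (fun r ↦ inner ℝ (g r) (g' r)) (volume.restrict s) := by
  -- The inner product is half the derivative of `‖g‖²`, and derivatives are always measurable.
  refine ((stronglyMeasurable_deriv (‖g ·‖ ^ 2)).const_mul 2⁻¹).aestronglyMeasurable.congr
    (ae_restrict_of_forall_mem hs fun r hr ↦ ?_)
  simp [(hg r hr).norm_sq.deriv]

lemma norm_sq_eq_neg_two_mul_integral_Ioi_inner (hcont : ContinuousWithinAt g (Ici R) R)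
    (hg : ∀ r ∈ Ioi R, HasDerivAt g (g' r) r)
    (hint : IntegrableOn (fun r ↦ ‖g r‖ ^ 2) (Ioi R))
    (hint' : IntegrableOn (fun r ↦ inner ℝ (g r) (g' r)) (Ioi R)) :
    ‖g R‖ ^ 2 = -2 * ∫ r in Ioi R, inner ℝ (g r) (g' r) := by
  have hderiv : ∀ r ∈ Ioi R, HasDerivAt (fun r ↦ ‖g r‖ ^ 2) (2 * inner ℝ (g r) (g' r)) r :=
    fun r hr ↦ (hg r hr).norm_sq
  have htendsto : Tendsto (fun r ↦ ‖g r‖ ^ 2) atTop (nhds 0) :=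
    tendsto_zero_of_hasDerivAt_of_integrableOn_Ioi hderiv (hint'.const_mul 2) hint
  have hftc := integral_Ioi_of_hasDerivAt_of_tendsto (hcont.norm.pow 2) hderiv
    (hint'.const_mul 2) htendsto
  rw [integral_const_mul, Pi.pow_apply] at hftc
  linarith

lemma norm_sq_le_two_mul_integral_Ioi_norm_mul_norm (hcont : ContinuousWithinAt g (Ici R) R)
    (hg : ∀ r ∈ Ioi R, HasDerivAt g (g' r) r)
    (hint : IntegrableOn (fun r ↦ ‖g r‖ ^ 2) (Ioi R))
    (hint' : IntegrableOn (fun r ↦ ‖g r‖ * ‖g' r‖) (Ioi R)) :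
    ‖g R‖ ^ 2 ≤ 2 * ∫ r in Ioi R, ‖g r‖ * ‖g' r‖ := by
  have norm_inner_le : ∀ᵐ r ∂volume.restrict (Ioi R),
      ‖inner ℝ (g r) (g' r)‖ ≤ ‖g r‖ * ‖g' r‖ := ae_of_all _ fun r ↦ norm_inner_le_norm _ _
  have hinner : IntegrableOn (fun r ↦ inner ℝ (g r) (g' r)) (Ioi R) :=
    hint'.mono' (aestronglyMeasurable_inner_hasDerivAt measurableSet_Ioi hg) norm_inner_le
  have hbound := neg_le_of_abs_le (norm_integral_le_of_norm_le hint' norm_inner_le)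
  rw [norm_sq_eq_neg_two_mul_integral_Ioi_inner hcont hg hint hinner]
  linarith

theorem stmt_19_general {w : ℝ → ℝ} (hg : ∀ r ∈ Ioi a, HasDerivAt g (g' r) r)
    (hw : MonotoneOn w (Ioi a)) (hw₀ : ∀ r ∈ Ioi a, 0 ≤ w r)
    (hint : IntegrableOn (fun r ↦ ‖g r‖ ^ 2 * w r) (Ioi a))
    (hint' : IntegrableOn (fun r ↦ ‖g' r‖ ^ 2 * w r) (Ioi a)) (hR : a < R) :
    w R * ‖g R‖ ^ 2 ≤
      2 * √(∫ r in Ioi a, ‖g r‖ ^ 2 * w r) * √(∫ r in Ioi a, ‖g' r‖ ^ 2 * w r) := by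
  rcases (hw₀ R hR).eq_or_lt with hwR | hwR
  · rw [← hwR, zero_mul]
    positivity
  have hsub : Ioi R ⊆ Ioi a := Ioi_subset_Ioi hR.le
  have le_weight : ∀ r ∈ Ioi R, w R ≤ w r := fun r hr ↦ hw hR (hsub hr) (le_of_lt hr)
  have weight_nonneg : ∀ᵐ r ∂volume.restrict (Ioi a), 0 ≤ w r :=
    ae_restrict_of_forall_mem measurableSet_Ioi hw₀
  have integrableOn_Ioi_R {f : ℝ → ℝ} (hf : IntegrableOn (fun r ↦ f r * w r) (Ioi a)) :
      IntegrableOn f (Ioi R) :=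
    integrableOn_of_integrableOn_mul_of_le measurableSet_Ioi hwR le_weight
      (aemeasurable_restrict_of_monotoneOn measurableSet_Ioi (hw.mono hsub)) (hf.mono_set hsub)
  have hprod : IntegrableOn (fun r ↦ ‖g r‖ * ‖g' r‖ * w r) (Ioi a) :=
    integrable_norm_mul_norm_mul_weight weight_nonneg hint hint'
  calc w R * ‖g R‖ ^ 2
    _ ≤ w R * (2 * ∫ r in Ioi R, ‖g r‖ * ‖g' r‖) := by
        gcongr
        exact norm_sq_le_two_mul_integral_Ioi_norm_mul_norm
          (hg R hR).continuousAt.continuousWithinAt (fun r hr ↦ hg r (hsub hr))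
          (integrableOn_Ioi_R hint) (integrableOn_Ioi_R hprod)
    _ = 2 * (w R * ∫ r in Ioi R, ‖g r‖ * ‖g' r‖) := mul_left_comm _ _ _
    _ ≤ 2 * ∫ r in Ioi a, ‖g r‖ * ‖g' r‖ * w r := by
        gcongr
        exact mul_setIntegral_le_setIntegral_mul measurableSet_Ioi measurableSet_Ioi hsub hwR.le
          le_weight hw₀ (fun r _ ↦ by positivity) hprod
    _ ≤ 2 * (√(∫ r in Ioi a, ‖g r‖ ^ 2 * w r) * √(∫ r in Ioi a, ‖g' r‖ ^ 2 * w r)) := by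
        gcongr
        exact integral_norm_mul_norm_mul_weight_le weight_nonneg hint hint'
    _ = 2 * √(∫ r in Ioi a, ‖g r‖ ^ 2 * w r) * √(∫ r in Ioi a, ‖g' r‖ ^ 2 * w r) :=
        (mul_assoc _ _ _).symm

end HalfLine

/-- the two-dimensional radial decay estimate
`g(R)² ≤ (2/R) (∫ g² r dr)^{1/2} (∫ g'² r dr)^{1/2}`. -/
theorem stmt_19 (g : ℝ → ℝ)
    (hg : ContDiffOn ℝ 1 g (Set.Ioi 0))
    (hlim : Filter.Tendsto g Filter.atTop (nhds 0))
    (hint1 : IntegrableOn (fun r => (g r)^2 * r) (Set.Ioi 0))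
    (hint2 : IntegrableOn (fun r => (deriv g r)^2 * r) (Set.Ioi 0)) :
    ∀ R : ℝ, 0 < R →
      (g R)^2 ≤ (2 / R) * Real.sqrt (∫ r in Set.Ioi (0:ℝ), (g r)^2 * r)
                        * Real.sqrt (∫ r in Set.Ioi (0:ℝ), (deriv g r)^2 * r) := by
  intro R hR
  have hderiv : ∀ r ∈ Ioi (0 : ℝ), HasDerivAt g (deriv g r) r := fun r hr ↦
    ((hg.differentiableOn one_ne_zero).differentiableAt (Ioi_mem_nhds hr)).hasDerivAt
  have hweighted := stmt_19_general (w := id) hderiv monotoneOn_id (fun r hr ↦ le_of_lt hr)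
    (by simpa using hint1) (by simpa using hint2) hR
  simp only [Real.norm_eq_abs, sq_abs, id_eq] at hweighted
  rwa [mul_assoc, div_mul_eq_mul_div, ← mul_assoc, le_div_iff₀' hR]
end
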